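/- Every effectively if-essentially ℱ-incomplete c.e. theory is effectively ef-essentially ℱ-incomplete. -/

import Mathlib

/-!
Let `Φ` witness if-essential incompleteness of `U`. Applying `Φ` to an index of `U ∪ {φ}`, computed
from `φ`, yields the required sentence, but `Φ` may diverge when `U ∪ {φ}` is inconsistent.
Inconsistency being c.e., search for a proof of `⊥` from `U ∪ {φ}` in parallel, and output an
arbitrary sentence if one is found: one of the two computations always halts, and only the first can
when `U ∪ {φ}` is consistent.
-/

open FirstOrder FirstOrder.Language

namespace PourEl

/-! ## Recursion-theoretic notions -/

/-- The `i`-th computably enumerable subset of `ℕ` (the domain of the `i`-th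
partial computable function). -/
def WSet (i : ℕ) : Set ℕ :=
  {n | ((Denumerable.ofNat Nat.Partrec.Code i).eval n).Dom}

/-- A set of natural numbers is computably enumerable. -/
def CE (A : Set ℕ) : Prop := ∃ i, A = WSet i

/-- A set of natural numbers is computable. -/
def Comp (A : Set ℕ) : Prop := ComputablePred (· ∈ A)

/-- Disjoint sets `X`, `Y` are computably separable iff some computable set
contains `X` and is disjoint from `Y`. -/
def CompSeparable (X Y : Set ℕ) : Prop :=
  ∃ Z : Set ℕ, Comp Z ∧ X ⊆ Z ∧ Y ∩ Z = ∅

/-- Computable inseparability. -/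
def CompInseparable (X Y : Set ℕ) : Prop := ¬ CompSeparable X Y

/-- `Z` and `W` weakly biseparate `X` and `Y`. -/
def WeaklyBiseparate {α : Type*} (Z W X Y : Set α) : Prop :=
  X ⊆ Z ∧ Y ⊆ W ∧ Z ∩ Y = ∅ ∧ W ∩ X = ∅

/-- `Z` and `W` biseparate `X` and `Y`. -/
def Biseparate {α : Type*} (Z W X Y : Set α) : Prop :=
  WeaklyBiseparate Z W X Y ∧ Z ∩ W = ∅

/-! ## Logical notions -/

variable {L : FirstOrder.Language}

/-- Provability: `φ` is a first-order consequence of `U` (by Gödel completeness,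
semantic consequence). -/
def Prv (U : L.Theory) (φ : L.Sentence) : Prop := U ⊨ᵇ φ

/-- `U_p`: the set of theorems of `U`. -/
def Thms (U : L.Theory) : Set L.Sentence := {φ | Prv U φ}

/-- `U_r`: the set of refutable sentences of `U`. -/
def Refut (U : L.Theory) : Set L.Sentence := {φ | Prv U ∼φ}

/-- Consistency: `U ⊬ ⊥`. -/
def Consistent (U : L.Theory) : Prop := ¬ Prv U ⊥

/-- `φ` is independent of `U`: `U` proves neither `φ` nor `¬φ`. -/
def Independent (U : L.Theory) (φ : L.Sentence) : Prop := ¬ Prv U φ ∧ ¬ Prv U ∼φ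

/-- `U` is incomplete: some sentence is independent of it. -/
def Incomplete (U : L.Theory) : Prop := ∃ φ, Independent U φ

/-- Mono-consequence: `U ⊢_m φ` iff `ψ ⊢ φ` for some `ψ ∈ U`. -/
def MPrv (U : L.Theory) (φ : L.Sentence) : Prop := ∃ ψ ∈ U, Prv {ψ} φ

/-- `U_m`: the set of mono-theorems of `U`. -/
def MThms (U : L.Theory) : Set L.Sentence := {φ | MPrv U φ}

/-- `U_n`: the set of mono-refutable sentences of `U`. -/
def MRefut (U : L.Theory) : Set L.Sentence := {φ | MPrv U ∼φ}

/-- Mono-consistency: every member is consistent by itself. -/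
def MonoConsistent (U : L.Theory) : Prop := ∀ ψ ∈ U, Consistent ({ψ} : L.Theory)

/-- `Û`: the set of all non-empty finite conjunctions of elements of `U`. -/
def hat (U : L.Theory) : L.Theory :=
  {φ | ∃ (ψ : L.Sentence) (l : List L.Sentence),
    ψ ∈ U ∧ (∀ χ ∈ l, χ ∈ U) ∧ φ = l.foldl (· ⊓ ·) ψ}

/-- `U ⋓ V`. -/
def Cup (U V : L.Theory) : L.Theory :=
  {χ | ∃ φ ∈ U, ∃ ψ ∈ V, χ = φ ⊓ ψ}

/-- `U ⋐ V`: for every `φ ∈ U` and `ψ ∈ V` there is `ρ ∈ V` with `ρ ⊢ φ ∧ ψ`. -/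
def Ssub (U V : L.Theory) : Prop :=
  ∀ φ ∈ U, ∀ ψ ∈ V, ∃ ρ ∈ V, Prv {ρ} (φ ⊓ ψ)

/-! ## Gödel numbering -/

/-- A Gödel numbering of the sentences of a (countable) signature: a bijective
coding of sentences by natural numbers that is effective for the basic syntactic
operations, and for which the theorems of a c.e. theory can be effectively
enumerated from an index of the theory. -/
structure Numbering (L : FirstOrder.Language) where
  equiv : L.Sentence ≃ ℕ
  neg_comp : Computable fun n => equiv ∼(equiv.symm n)
  inf_comp : Computable₂ fun m n => equiv (equiv.symm m ⊓ equiv.symm n)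
  imp_comp : Computable₂ fun m n => equiv (equiv.symm m ⟹ equiv.symm n)
  iff_comp : Computable₂ fun m n => equiv (equiv.symm m ⇔ equiv.symm n)
  thmIdx : ℕ → ℕ
  thmIdx_comp : Computable thmIdx
  thmIdx_spec : ∀ i, WSet (thmIdx i) = equiv '' Thms (equiv.symm '' WSet i)

namespace Numbering

variable (g : Numbering L)

/-- The code of a sentence. -/
def code (φ : L.Sentence) : ℕ := g.equiv φ

/-- The set of codes of a set of sentences. -/
def codes (S : Set L.Sentence) : Set ℕ := g.equiv '' S

/-- The theory axiomatised by the `i`-th c.e. set (identified with a set of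
sentences via the numbering). -/
def thy (i : ℕ) : L.Theory := g.equiv.symm '' WSet i

/-- The theory `U` is computably enumerable (with respect to the numbering). -/
def CEThy (U : L.Theory) : Prop := CE (g.codes U)

end Numbering


/-- `Φ` witnesses that `U` is effectively if-essentially `F`-incomplete: whenever
`W i` is a consistent finite extension of `U` (as a set of axioms), `Φ i`
converges to (the code of) a sentence in `F (W i)` independent of `W i`. -/
def IfEssWitness (g : Numbering L) (U : L.Theory)
    (F : Set L.Sentence → Set L.Sentence) (Φ : ℕ →. ℕ) : Prop :=
  ∀ i, (∃ Γ : Finset L.Sentence, g.thy i = U ∪ (Γ : Set L.Sentence)) →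
    Consistent (g.thy i) →
    ∃ n ∈ Φ i, ∃ φ : L.Sentence, g.code φ = n ∧ φ ∈ F (g.thy i) ∧ Independent (g.thy i) φ

/-- `U` is effectively if-essentially `F`-incomplete. -/
def EffIfEssIncomplete (g : Numbering L) (U : L.Theory)
    (F : Set L.Sentence → Set L.Sentence) : Prop :=
  ∃ Φ : ℕ →. ℕ, Partrec Φ ∧ IfEssWitness g U F Φ

/-- `U` is effectively ef-essentially `F`-incomplete: a total computable function
on (codes of) sentences produces, for each `φ` consistent with `U`, a sentence
independent of `U ∪ {φ}` lying in `F (U ∪ {φ})`. -/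
def EffEfEssIncomplete (g : Numbering L) (U : L.Theory)
    (F : Set L.Sentence → Set L.Sentence) : Prop :=
  ∃ Φ : ℕ → ℕ, Computable Φ ∧ ∀ φ : L.Sentence,
    Consistent (U ∪ {φ}) →
    Independent (U ∪ {φ}) (g.equiv.symm (Φ (g.code φ))) ∧
    g.equiv.symm (Φ (g.code φ)) ∈ F (U ∪ {φ})

section Computability

variable {α β : Type*} [Primcodable α] [Primcodable β]

theorem rePred_comp {p : β → Prop} (hp : REPred p) {f : α → β} (hf : Computable f) :
    REPred fun a => p (f a) :=
  Partrec.comp hp hf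

theorem dom_assert_some {γ : Type*} {p : Prop} {c : γ} :
    (Part.assert p fun _ => Part.some c).Dom ↔ p :=
  exists_prop.trans (and_iff_left trivial)

theorem rePred_or {p q : α → Prop} (hp : REPred p) (hq : REPred q) :
    REPred fun a => p a ∨ q a := by
  obtain ⟨k, hk, hkspec⟩ := Partrec.merge' hp hq
  refine hk.dom_re.of_eq fun a => ?_
  simp only [(hkspec a).2, dom_assert_some]

theorem rePred_mem_wSet : REPred fun p : ℕ × ℕ => p.2 ∈ WSet p.1 :=
  (Nat.Partrec.Code.eval_part.comp ((Computable.ofNat _).comp Computable.fst)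
    Computable.snd).dom_re

/-- A form of the s-m-n theorem. -/
theorem exists_computable_wSet_eq {A : α → Set ℕ} (hA : REPred fun p : α × ℕ => p.2 ∈ A p.1) :
    ∃ s : α → ℕ, Computable s ∧ ∀ a, WSet (s a) = A a := by
  obtain ⟨c, hc⟩ := Nat.Partrec.Code.exists_code.1 hA
  refine ⟨fun a => Encodable.encode (c.curry (Encodable.encode a)), ?_, fun a => ?_⟩
  · exact (Primrec.encode.comp
      (Nat.Partrec.Code.primrec₂_curry.comp (Primrec.const c) Primrec.encode)).to_comp
  · ext n
    simp [WSet, Nat.Partrec.Code.eval_curry, hc, dom_assert_some]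

theorem exists_computable_wSet_insert (e : ℕ) :
    ∃ s : ℕ → ℕ, Computable s ∧ ∀ n, WSet (s n) = WSet e ∪ {n} :=
  have mem_re : REPred fun p : ℕ × ℕ => p.2 ∈ WSet e :=
    rePred_comp rePred_mem_wSet ((Computable.const e).pair Computable.snd)
  have eq_re : REPred fun p : ℕ × ℕ => p.2 = p.1 :=
    ComputablePred.to_re (Primrec.eq.comp Primrec.snd Primrec.fst).computablePred
  exists_computable_wSet_eq (A := fun n => WSet e ∪ {n}) (rePred_or mem_re eq_re)

theorem exists_computable_mem_of_dom_or [Inhabited β] {f : α →. β} (hf : Partrec f)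
    {q : α → Prop} (hq : REPred q) (h : ∀ a, (f a).Dom ∨ q a) :
    ∃ k : α → β, Computable k ∧ ∀ a, ¬ q a → k a ∈ f a := by
  obtain ⟨k, hk, hkspec⟩ := Partrec.merge' hf (hq.map (Computable.const (default : β)).to₂)
  have k_dom (a : α) : (k a).Dom := (hkspec a).2.2 ((h a).imp_right dom_assert_some.2)
  refine ⟨fun a => (k a).get (k_dom a), hk.of_eq fun a => (Part.some_get (k_dom a)).symm,
    fun a ha => ?_⟩
  exact ((hkspec a).1 _ (Part.get_mem (k_dom a))).resolve_right fun hmem =>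
    ha (dom_assert_some.1 (Part.dom_iff_mem.2 ⟨_, hmem⟩))

end Computability

namespace Numbering

variable (g : Numbering L)

theorem code_mem_codes {φ : L.Sentence} {S : Set L.Sentence} : g.code φ ∈ g.codes S ↔ φ ∈ S :=
  g.equiv.injective.mem_set_image

theorem mem_thy {φ : L.Sentence} {i : ℕ} : φ ∈ g.thy i ↔ g.code φ ∈ WSet i := by
  simp [thy, code]

theorem code_mem_wSet_thmIdx {φ : L.Sentence} {i : ℕ} :
    g.code φ ∈ WSet (g.thmIdx i) ↔ Prv (g.thy i) φ := by
  rw [g.thmIdx_spec]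
  exact g.code_mem_codes

theorem rePred_prv_thy (φ : L.Sentence) : REPred fun i => Prv (g.thy i) φ :=
  (rePred_comp rePred_mem_wSet (g.thmIdx_comp.pair (Computable.const (g.code φ)))).of_eq
    fun _ => g.code_mem_wSet_thmIdx

variable {g} in
theorem CEThy.exists_computable_thy_insert {U : L.Theory} (hU : g.CEThy U) :
    ∃ s : ℕ → ℕ, Computable s ∧ ∀ φ, g.thy (s (g.code φ)) = U ∪ {φ} := by
  obtain ⟨e, he⟩ := hU
  obtain ⟨s, hs, hsW⟩ := exists_computable_wSet_insert e
  refine ⟨s, hs, fun φ => Set.ext fun ψ => ?_⟩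
  rw [g.mem_thy, hsW, ← he, Set.mem_union, g.code_mem_codes]
  exact or_congr_right g.equiv.apply_eq_iff_eq

end Numbering

theorem IfEssWitness.exists_mem_of_thy_eq {g : Numbering L} {U : L.Theory}
    {F : Set L.Sentence → Set L.Sentence} {Φ : ℕ →. ℕ} (h : IfEssWitness g U F Φ)
    {i : ℕ} {Γ : Finset L.Sentence} (hi : g.thy i = U ∪ Γ)
    (hcons : Consistent (U ∪ (Γ : Set L.Sentence))) :
    ∃ n ∈ Φ i, g.equiv.symm n ∈ F (U ∪ Γ) ∧ Independent (U ∪ Γ) (g.equiv.symm n) := by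
  obtain ⟨n, hn, φ, rfl, hF, hind⟩ := h i ⟨Γ, hi⟩ (hi ▸ hcons)
  rw [hi] at hF hind
  exact ⟨_, hn, by simpa [Numbering.code] using ⟨hF, hind⟩⟩

/-- Every effectively if-essentially `F`-incomplete c.e. theory
is effectively ef-essentially `F`-incomplete. -/
theorem statement12 {L : FirstOrder.Language} (g : Numbering L) (U : L.Theory)
    (hU : g.CEThy U)
    (F : Set L.Sentence → Set L.Sentence)
    (h : EffIfEssIncomplete g U F) :
    EffEfEssIncomplete g U F := by
  obtain ⟨Φ, hΦ, hwit⟩ := h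
  obtain ⟨s, hs, thy_s⟩ := hU.exists_computable_thy_insert
  have witness (φ : L.Sentence) (hφ : Consistent (U ∪ {φ})) :
      ∃ n ∈ Φ (s (g.code φ)), g.equiv.symm n ∈ F (U ∪ {φ}) ∧
        Independent (U ∪ {φ}) (g.equiv.symm n) := by
    simpa using hwit.exists_mem_of_thy_eq (Γ := {φ}) (by simpa using thy_s φ) (by simpa using hφ)
  have halts_or_inconsistent (n : ℕ) : (Φ (s n)).Dom ∨ Prv (g.thy (s n)) ⊥ := by
    obtain ⟨φ, rfl⟩ : ∃ φ, g.code φ = n := g.equiv.surjective n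
    refine or_iff_not_imp_right.2 fun hφ => ?_
    obtain ⟨m, hm, -⟩ := witness φ (thy_s φ ▸ hφ)
    exact Part.dom_iff_mem.2 ⟨m, hm⟩
  obtain ⟨k, hk, k_mem⟩ := exists_computable_mem_of_dom_or (hΦ.comp hs)
    (rePred_comp (g.rePred_prv_thy ⊥) hs) halts_or_inconsistent
  refine ⟨k, hk, fun φ hφ => ?_⟩
  obtain ⟨n, hn, hF, hind⟩ := witness φ hφ
  obtain rfl : k (g.code φ) = n := Part.mem_unique (k_mem _ ((thy_s φ).symm ▸ hφ)) hn
  exact ⟨hind, hF⟩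

end PourEl
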